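/- arXiv:math/0703695 — 2 statements merged into one kernel-verified Lean document; each statement's English description precedes it below -/
import Mathlib

section
/- Assume μ_i ≥ i − 1 for all i = 1,…,n. Then in the polynomial ring R' = K[x_1,…,x_m,y_1,…,y_m], the sequence y_1 − x_1, y_2 − x_2, …, y_m − x_m is a regular sequence on the module R'/(I_{λ−μ}R'). -/
open MvPolynomial

/-!
Modulo `y_j - x_j` for `j` in a set `T`, the ideal `(x_i y_j : r i j)` becomes the monomial ideal
`I_T` obtained by substituting `x_j` for `y_j`, `j ∈ T`. For `k ∉ T` this ideal is generated by
monomials of degree at most one in `x_k` and in `y_k`. If `(y_k - x_k) f ∈ I_T`, then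
`(y_k ^ N - x_k ^ N) f ∈ I_T` for every `N`; for large `N` the two halves share no monomial, so both
lie in `I_T`, and the degree bound gives `y_k f ∈ I_T` and `x_k f ∈ I_T`. Hence `f ∈ I_T` as soon as
a monomial `w` with `y_k w, x_k w ∈ I_T` lies in `I_T`. The only nontrivial case is that of
generators `x_i y_k` and `x_k y_j`, for which transitivity of `r` supplies the generator `x_i y_j`,
and antisymmetry ensures that its image in `I_T` is not the square `x_i ^ 2`. The Ferrers relation
`μ_i < j ≤ λ_i` is transitive and antisymmetric because it implies `i ≤ μ_i + 1 ≤ j`, and `λ` is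
weakly decreasing.
-/

section Finsupp

variable {τ : Type*}

theorem single_add_single_le {a b : τ} {w : τ →₀ ℕ} (hab : a ≠ b)
    (ha : Finsupp.single a 1 ≤ w) (hb : Finsupp.single b 1 ≤ w) :
    Finsupp.single a 1 + Finsupp.single b 1 ≤ w := by
  classical
  intro t
  have hat := ha t
  have hbt := hb t
  grind [Finsupp.add_apply]

theorem le_add_single_of_apply_le {a : τ} {c d : ℕ} {e w : τ →₀ ℕ} (he : e a ≤ w a + d)
    (h : e ≤ w + Finsupp.single a c) : e ≤ w + Finsupp.single a d := by
  classical
  intro t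
  have ht := h t
  grind [Finsupp.add_apply]

end Finsupp

section MonomialIdeal

variable {τ A : Type*} [CommRing A] {S : Set (τ →₀ ℕ)} {a b : τ} {f : MvPolynomial τ A}

theorem add_single_mem_support_X_pow_sub_X_pow_mul (hab : a ≠ b) {N : ℕ} (hN : f.degreeOf a < N)
    {w : τ →₀ ℕ} (hw : w ∈ f.support) :
    w + Finsupp.single a N ∈ ((X a ^ N - X b ^ N) * f).support := by
  classical
  have hcoeff : coeff (w + Finsupp.single a N) (X b ^ N * f) = 0 := by
    rw [X_pow_eq_monomial, coeff_monomial_mul', one_mul]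
    refine ite_eq_right_iff.2 fun _ => notMem_support_iff.1 (notMem_support_of_degreeOf_lt a ?_)
    simpa [hab.symm] using hN.trans_le (Nat.le_add_left N (w a))
  rwa [mem_support_iff, sub_mul, coeff_sub, hcoeff, sub_zero, X_pow_eq_monomial, add_comm w,
    coeff_monomial_mul, one_mul, ← mem_support_iff]

theorem exists_le_add_single_of_X_sub_X_mul_mem (hab : a ≠ b) (ha : ∀ e ∈ S, e a ≤ 1)
    (hf : (X a - X b) * f ∈ Ideal.span ((fun s => monomial s (1 : A)) '' S))
    {w : τ →₀ ℕ} (hw : w ∈ f.support) : ∃ e ∈ S, e ≤ w + Finsupp.single a 1 := by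
  set N := f.degreeOf a + 1
  have hpow : (X a ^ N - X b ^ N) * f ∈ Ideal.span ((fun s => monomial s (1 : A)) '' S) :=
    Ideal.mem_of_dvd _ (mul_dvd_mul_right (sub_dvd_pow_sub_pow _ _ N) f) hf
  obtain ⟨e, he, hle⟩ := mem_ideal_span_monomial_image.1 hpow _
    (add_single_mem_support_X_pow_sub_X_pow_mul hab (Nat.lt_succ_self _) hw)
  exact ⟨e, he, le_add_single_of_apply_le ((ha e he).trans (Nat.le_add_left 1 _)) hle⟩

theorem mem_span_monomial_of_X_sub_X_mul_mem (hab : a ≠ b)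
    (ha : ∀ e ∈ S, e a ≤ 1) (hb : ∀ e ∈ S, e b ≤ 1)
    (hS : ∀ w, (∃ e ∈ S, e ≤ w + Finsupp.single a 1) → (∃ e ∈ S, e ≤ w + Finsupp.single b 1) →
      ∃ e ∈ S, e ≤ w)
    (hf : (X a - X b) * f ∈ Ideal.span ((fun s => monomial s (1 : A)) '' S)) :
    f ∈ Ideal.span ((fun s => monomial s (1 : A)) '' S) := by
  have hf' : (X b - X a) * f ∈ Ideal.span ((fun s => monomial s (1 : A)) '' S) := by
    rwa [← neg_sub, neg_mul, neg_mem_iff]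
  exact mem_ideal_span_monomial_image.2 fun w hw =>
    hS w (exists_le_add_single_of_X_sub_X_mul_mem hab ha hf hw)
      (exists_le_add_single_of_X_sub_X_mul_mem hab.symm hb hf' hw)

end MonomialIdeal

section Quotient

variable {R : Type*} [CommRing R] {I J : Ideal R}

theorem mem_sup_iff_apply_mem_map {F : Type*} [FunLike F R R] [RingHomClass F R R] {φ : F}
    (hker : J ≤ RingHom.ker φ) (hsub : ∀ f, f - φ f ∈ J) {f : R} :
    f ∈ I ⊔ J ↔ φ f ∈ I.map φ := by
  have hle : I.map φ ≤ I ⊔ J := Ideal.map_le_iff_le_comap.2 fun g hg =>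
    (Submodule.sub_mem_iff_right _ (Ideal.mem_sup_left hg)).1 (Ideal.mem_sup_right (hsub g))
  have hge : I ⊔ J ≤ (I.map φ).comap φ :=
    sup_le Ideal.le_comap_map (hker.trans (Ideal.ker_le_comap φ))
  constructor
  · exact fun hf => hge hf
  · exact fun hf => (Submodule.sub_mem_iff_left _ (hle hf)).1 (Ideal.mem_sup_right (hsub f))

theorem mk_mem_smul_top_iff {f : R} :
    Ideal.Quotient.mk I f ∈ (J • ⊤ : Submodule R (R ⧸ I)) ↔ f ∈ I ⊔ J := by
  rw [Ideal.smul_top_eq_map, Submodule.restrictScalars_mem, sup_comm]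
  exact Ideal.mem_quotient_iff_mem_sup

theorem isSMulRegular_quotient_smul_top_iff {a : R} :
    IsSMulRegular ((R ⧸ I) ⧸ (J • ⊤ : Submodule R (R ⧸ I))) a ↔
      ∀ f, a * f ∈ I ⊔ J → f ∈ I ⊔ J := by
  rw [isSMulRegular_quotient_iff_mem_of_smul_mem, Ideal.Quotient.mk_surjective.forall]
  simp_rw [← mk_mem_smul_top_iff (I := I)]
  rfl

theorem top_ne_smul_top_quotient_iff :
    (⊤ : Submodule R (R ⧸ I)) ≠ J • ⊤ ↔ I ⊔ J ≠ ⊤ := by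
  refine not_congr ⟨fun h => ?_, fun h => ?_⟩
  · exact (Ideal.eq_top_iff_one _).2 (mk_mem_smul_top_iff.1 (h ▸ Submodule.mem_top))
  · refine (eq_top_iff.2 fun q _ => ?_).symm
    obtain ⟨f, rfl⟩ := Ideal.Quotient.mk_surjective q
    exact mk_mem_smul_top_iff.2 (h ▸ Submodule.mem_top)

end Quotient

theorem sub_rename_mem_of_X_sub_X_mem {τ A : Type*} [CommRing A] {g : τ → τ}
    {J : Ideal (MvPolynomial τ A)} (hJ : ∀ t, X t - X (g t) ∈ J) (f : MvPolynomial τ A) :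
    f - rename g f ∈ J := by
  have hcomp : (Ideal.Quotient.mkₐ A J).comp (rename g) = Ideal.Quotient.mkₐ A J :=
    algHom_ext fun t => by simpa using (Ideal.Quotient.eq.2 (hJ t)).symm
  exact Ideal.Quotient.eq.1 (DFunLike.congr_fun hcomp f).symm

section Relation

variable {σ : Type*}

/-- The edge ideal `(x_i y_j : r i j)` of the bipartite graph of the relation `r`. The variables
`x_i` and `y_j` are indexed by `Sum.inl i` and `Sum.inr j`. -/
noncomputable def bipartiteEdgeIdeal (A : Type*) [CommRing A] (r : σ → σ → Prop) :
    Ideal (MvPolynomial (σ ⊕ σ) A) :=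
  Ideal.span {p | ∃ i j, r i j ∧ p = X (Sum.inl i) * X (Sum.inr j)}

/-- The linear form `y_j - x_j`. -/
noncomputable def diagonalForm (A : Type*) [CommRing A] (j : σ) : MvPolynomial (σ ⊕ σ) A :=
  X (Sum.inr j) - X (Sum.inl j)

open Classical in
/-- The identification of variables that replaces `y_j` by `x_j` for `j ∈ T` and fixes every other
variable. -/
noncomputable def foldVar (T : Set σ) : σ ⊕ σ → σ ⊕ σ :=
  Sum.elim Sum.inl (T.piecewise Sum.inl Sum.inr)

/-- The exponents of the generators `x_i y_j`, `r i j`, of the edge ideal after the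
identification `foldVar T`. -/
def foldedExponents (r : σ → σ → Prop) (T : Set σ) : Set (σ ⊕ σ →₀ ℕ) :=
  {e | ∃ i j, r i j ∧ e = Finsupp.single (Sum.inl i) 1 + Finsupp.single (foldVar T (Sum.inr j)) 1}

variable {T : Set σ} {r : σ → σ → Prop} {i j k : σ}

@[simp]
theorem foldVar_inl : foldVar T (Sum.inl i) = Sum.inl i := rfl

theorem foldVar_inr_of_mem (hj : j ∈ T) : foldVar T (Sum.inr j) = Sum.inl j := by
  classical exact Set.piecewise_eq_of_mem _ _ _ hj

theorem foldVar_inr_of_notMem (hj : j ∉ T) : foldVar T (Sum.inr j) = Sum.inr j := by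
  classical exact Set.piecewise_eq_of_notMem _ _ _ hj

theorem foldVar_inr_eq_inl_iff : foldVar T (Sum.inr j) = Sum.inl i ↔ j ∈ T ∧ j = i := by
  by_cases hj : j ∈ T <;> simp [foldVar_inr_of_mem, foldVar_inr_of_notMem, hj]

theorem foldVar_inr_eq_inr_iff : foldVar T (Sum.inr j) = Sum.inr i ↔ j ∉ T ∧ j = i := by
  by_cases hj : j ∈ T <;> simp [foldVar_inr_of_mem, foldVar_inr_of_notMem, hj]

theorem apply_inr_le_one_of_mem_foldedExponents {e : σ ⊕ σ →₀ ℕ} (he : e ∈ foldedExponents r T)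
    (k : σ) : e (Sum.inr k) ≤ 1 := by
  classical
  obtain ⟨i, j, -, rfl⟩ := he
  simp only [Finsupp.add_apply, Finsupp.single_apply, reduceCtorEq, if_false, zero_add]
  split_ifs <;> simp

theorem apply_inl_le_one_of_mem_foldedExponents {e : σ ⊕ σ →₀ ℕ} (he : e ∈ foldedExponents r T)
    (hk : k ∉ T) : e (Sum.inl k) ≤ 1 := by
  classical
  obtain ⟨i, j, -, rfl⟩ := he
  have hjk : foldVar T (Sum.inr j) ≠ Sum.inl k := fun h => by
    obtain ⟨hj, rfl⟩ := foldVar_inr_eq_inl_iff.1 h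
    exact hk hj
  simp only [Finsupp.add_apply, Finsupp.single_apply, hjk, if_false, add_zero]
  split_ifs <;> simp

theorem exists_mem_foldedExponents_le (htrans : IsTrans σ r) (hanti : Std.Antisymm r) (hk : k ∉ T)
    {w : σ ⊕ σ →₀ ℕ}
    (hy : ∃ e ∈ foldedExponents r T, e ≤ w + Finsupp.single (Sum.inr k) 1)
    (hx : ∃ e ∈ foldedExponents r T, e ≤ w + Finsupp.single (Sum.inl k) 1) :
    ∃ e ∈ foldedExponents r T, e ≤ w := by
  obtain ⟨_, ⟨i, j, hij, rfl⟩, hy⟩ := hy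
  obtain ⟨_, ⟨i', j', hij', rfl⟩, hx⟩ := hx
  rcases ne_or_eq j k with hjk | rfl
  · have hne : foldVar T (Sum.inr j) ≠ Sum.inr k := fun h => hjk (foldVar_inr_eq_inr_iff.1 h).2
    refine ⟨_, ⟨i, j, hij, rfl⟩, ?_⟩
    simpa using le_add_single_of_apply_le (d := 0) (by simp [hne]) hy
  rcases ne_or_eq i' j with hi'j | rfl
  · have hne : foldVar T (Sum.inr j') ≠ Sum.inl j := fun h => by
      obtain ⟨hj', rfl⟩ := foldVar_inr_eq_inl_iff.1 h
      exact hk hj'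
    refine ⟨_, ⟨i', j', hij', rfl⟩, ?_⟩
    simpa using le_add_single_of_apply_le (d := 0) (by simp [hi'j, hne]) hx
  have hxi : Finsupp.single (Sum.inl i) 1 ≤ w := by
    rwa [foldVar_inr_of_notMem hk, add_le_add_iff_right] at hy
  have hzj' : Finsupp.single (foldVar T (Sum.inr j')) 1 ≤ w := by
    rwa [add_comm w, add_le_add_iff_left] at hx
  have hne : Sum.inl i ≠ foldVar T (Sum.inr j') := fun h => by
    obtain ⟨hj', rfl⟩ := foldVar_inr_eq_inl_iff.1 h.symm
    exact hk (hanti.antisymm _ _ hij hij' ▸ hj')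
  exact ⟨_, ⟨i, j', htrans.trans _ _ _ hij hij', rfl⟩, single_add_single_le hne hxi hzj'⟩

variable {A : Type*} [CommRing A]

theorem map_rename_foldVar_bipartiteEdgeIdeal :
    (bipartiteEdgeIdeal A r).map (rename (foldVar T)) =
      Ideal.span ((fun s => monomial s (1 : A)) '' foldedExponents r T) := by
  rw [bipartiteEdgeIdeal, Ideal.map_span]
  have hgen (i j : σ) : rename (foldVar T) (X (Sum.inl i) * X (Sum.inr j) : MvPolynomial _ A) =
      monomial (Finsupp.single (Sum.inl i) 1 + Finsupp.single (foldVar T (Sum.inr j)) 1) 1 := by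
    rw [map_mul, rename_X, rename_X, foldVar_inl, X, X, monomial_mul, one_mul]
  congr 1
  ext p
  constructor
  · rintro ⟨_, ⟨i, j, hij, rfl⟩, rfl⟩
    exact ⟨_, ⟨i, j, hij, rfl⟩, (hgen i j).symm⟩
  · rintro ⟨_, ⟨i, j, hij, rfl⟩, rfl⟩
    exact ⟨_, ⟨i, j, hij, rfl⟩, hgen i j⟩

theorem mem_bipartiteEdgeIdeal_sup_span_diagonalForm_iff {f : MvPolynomial (σ ⊕ σ) A} :
    f ∈ bipartiteEdgeIdeal A r ⊔ Ideal.span (diagonalForm A '' T) ↔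
      rename (foldVar T) f ∈ Ideal.span ((fun s => monomial s (1 : A)) '' foldedExponents r T) := by
  rw [← map_rename_foldVar_bipartiteEdgeIdeal]
  refine mem_sup_iff_apply_mem_map ?_ (sub_rename_mem_of_X_sub_X_mem ?_)
  · rw [Ideal.span_le]
    rintro _ ⟨j, hj, rfl⟩
    simp [diagonalForm, foldVar_inr_of_mem hj]
  · rintro (j | j)
    · simp
    by_cases hj : j ∈ T
    · rw [foldVar_inr_of_mem hj]
      exact Ideal.subset_span ⟨j, hj, rfl⟩
    · simp [foldVar_inr_of_notMem hj]

theorem mem_bipartiteEdgeIdeal_sup_of_diagonalForm_mul_mem (htrans : IsTrans σ r)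
    (hanti : Std.Antisymm r) (hk : k ∉ T) {f : MvPolynomial (σ ⊕ σ) A}
    (hf : diagonalForm A k * f ∈ bipartiteEdgeIdeal A r ⊔ Ideal.span (diagonalForm A '' T)) :
    f ∈ bipartiteEdgeIdeal A r ⊔ Ideal.span (diagonalForm A '' T) := by
  rw [mem_bipartiteEdgeIdeal_sup_span_diagonalForm_iff] at hf ⊢
  rw [map_mul, diagonalForm, map_sub, rename_X, rename_X, foldVar_inl,
    foldVar_inr_of_notMem hk] at hf
  exact mem_span_monomial_of_X_sub_X_mul_mem Sum.inr_ne_inl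
    (fun _ he => apply_inr_le_one_of_mem_foldedExponents he k)
    (fun _ he => apply_inl_le_one_of_mem_foldedExponents he hk)
    (fun _ => exists_mem_foldedExponents_le htrans hanti hk) hf

theorem bipartiteEdgeIdeal_sup_span_diagonalForm_ne_top [Nontrivial A] :
    bipartiteEdgeIdeal A r ⊔ Ideal.span (diagonalForm A '' T) ≠ ⊤ := by
  refine ne_top_of_le_ne_top (RingHom.ker_ne_top (constantCoeff (σ := σ ⊕ σ) (R := A))) ?_
  refine sup_le (Ideal.span_le.2 ?_) (Ideal.span_le.2 ?_)
  · rintro _ ⟨i, j, -, rfl⟩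
    simp
  · rintro _ ⟨j, -, rfl⟩
    simp [diagonalForm]

theorem ofList_map_diagonalForm (l : List σ) :
    Ideal.ofList (l.map (diagonalForm A)) = Ideal.span (diagonalForm A '' {j | j ∈ l}) := by
  simp [Ideal.ofList, Set.image]

theorem ferrers_linear_forms_regular_sequence_general [Nontrivial A]
    (htrans : IsTrans σ r) (hanti : Std.Antisymm r) {l : List σ} (hl : l.Nodup) :
    RingTheory.Sequence.IsRegular (MvPolynomial (σ ⊕ σ) A ⧸ bipartiteEdgeIdeal A r)
      (l.map (diagonalForm A)) where
  regular_mod_prev t ht := by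
    rw [← List.map_take, ofList_map_diagonalForm, List.getElem_map,
      isSMulRegular_quotient_smul_top_iff]
    have ht' : l[t]'(by simpa using ht) ∉ l.take t := by
      simp [List.mem_take_iff_getElem, hl.getElem_inj_iff]
    exact fun _ => mem_bipartiteEdgeIdeal_sup_of_diagonalForm_mul_mem htrans hanti ht'
  top_ne_smul := by
    rw [ofList_map_diagonalForm, top_ne_smul_top_quotient_iff]
    exact bipartiteEdgeIdeal_sup_span_diagonalForm_ne_top

end Relation

section Ferrers

variable {n m : ℕ}

/-- The cells `(i, j)` of the skew shape `λ - μ`, with zero-based rows `i < n` viewed in `Fin m`,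
so that row and column indices can be compared. -/
def FerrersRel (hnm : n ≤ m) (lam mu : Fin n → ℕ) (i j : Fin m) : Prop :=
  ∃ a : Fin n, Fin.castLE hnm a = i ∧ mu a ≤ j.val ∧ j.val < lam a

variable {hnm : n ≤ m} {lam mu : Fin n → ℕ}

theorem FerrersRel.le (hmu : ∀ a : Fin n, a.val ≤ mu a) {i j : Fin m}
    (h : FerrersRel hnm lam mu i j) : i ≤ j := by
  obtain ⟨a, rfl, haj, -⟩ := h
  exact (hmu a).trans haj

theorem FerrersRel.antisymm (hmu : ∀ a : Fin n, a.val ≤ mu a) :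
    Std.Antisymm (FerrersRel hnm lam mu) where
  antisymm _ _ hij hji := le_antisymm (hij.le hmu) (hji.le hmu)

theorem FerrersRel.isTrans (hlam : Antitone lam) (hmu : ∀ a : Fin n, a.val ≤ mu a) :
    IsTrans (Fin m) (FerrersRel hnm lam mu) where
  trans i j k hij hjk := by
    have hle : i ≤ j := hij.le hmu
    have hle' : j ≤ k := hjk.le hmu
    obtain ⟨a, rfl, haj, -⟩ := hij
    obtain ⟨b, rfl, -, hkb⟩ := hjk
    exact ⟨a, rfl, haj.trans hle', hkb.trans_le (hlam hle)⟩

theorem bipartiteEdgeIdeal_ferrersRel (A : Type*) [CommRing A] (hnm : n ≤ m)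
    (lam mu : Fin n → ℕ) :
    bipartiteEdgeIdeal A (FerrersRel hnm lam mu) =
      Ideal.span {p | ∃ (i : Fin n) (j : Fin m), mu i ≤ j.val ∧ j.val < lam i ∧
        p = X (Sum.inl (Fin.castLE hnm i)) * X (Sum.inr j)} := by
  rw [bipartiteEdgeIdeal]
  congr 1
  ext p
  constructor
  · rintro ⟨_, j, ⟨a, rfl, hmu, hlam⟩, rfl⟩
    exact ⟨a, j, hmu, hlam, rfl⟩
  · rintro ⟨a, j, hmu, hlam, rfl⟩
    exact ⟨_, j, ⟨a, rfl, hmu, hlam⟩, rfl⟩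

end Ferrers

/-- Assume `μ_i ≥ i − 1` for all `i`. Then in
`R' = K[x_1,…,x_m,y_1,…,y_m]` (here `Sum.inl` indexes the `x`'s and `Sum.inr`
the `y`'s), the sequence `y_1 − x_1, …, y_m − x_m` is a regular sequence on
`R'/(I_{λ−μ}R')`, where `I_{λ−μ}R'` is generated by the monomials `x_i y_j`
with `1 ≤ i ≤ n`, `μ_i < j ≤ λ_i`.
Indices: `i : Fin n`/`j : Fin m` correspond to the 1-based indices `i.val+1`/`j.val+1`. -/
theorem ferrers_linear_forms_regular_sequence
    (K : Type*) [Field K] (n m : ℕ) (hn : 1 ≤ n) (hnm : n ≤ m)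
    (lam mu : Fin n → ℕ)
    (hlam_top : lam ⟨0, hn⟩ = m)
    (hlam_anti : Antitone lam)
    (hlam_pos : 1 ≤ lam ⟨n - 1, by omega⟩)
    (hmu_mono : Monotone mu)
    (hmu_lt : mu ⟨n - 1, by omega⟩ < lam ⟨n - 1, by omega⟩)
    (hmu_ge : ∀ i : Fin n, i.val ≤ mu i) :
    RingTheory.Sequence.IsRegular
      (MvPolynomial (Fin m ⊕ Fin m) K ⧸
        Ideal.span {p : MvPolynomial (Fin m ⊕ Fin m) K |
          ∃ (i : Fin n) (j : Fin m), mu i ≤ j.val ∧ j.val < lam i ∧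
            p = X (Sum.inl (Fin.castLE hnm i)) * X (Sum.inr j)})
      (List.ofFn fun j : Fin m =>
        (X (Sum.inr j) - X (Sum.inl j) : MvPolynomial (Fin m ⊕ Fin m) K)) := by
  rw [← bipartiteEdgeIdeal_ferrersRel, List.ofFn_eq_map]
  exact ferrers_linear_forms_regular_sequence_general (FerrersRel.isTrans hlam_anti hmu_ge)
    (FerrersRel.antisymm hmu_ge) (List.nodup_finRange m)
end

section
/- Assume μ_i ≥ i − 1 for all i = 1,…,n. Then the height of the specialized ideal Ī_{λ−μ} in S = K[x_1,…,x_m] equals min{ min_{1≤j≤n} (λ_j − μ_j + j − 1), n }. -/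
open MvPolynomial

/-- The height of an ideal: the infimum of the heights of the prime ideals
containing it. -/
noncomputable def idealHeight {A : Type*} [CommRing A] (I : Ideal A) : ℕ∞ :=
  sInf (Order.height '' {p : PrimeSpectrum A | I ≤ p.asIdeal})

/-!
The specialized ideal is the edge ideal of a graph with loops. A prime containing `x_i x_j` contains
`x_i` or `x_j`, so the variables in a prime over the ideal form a vertex cover; as `k` variables
generate an ideal of height `k`, the height is the least size of a vertex cover. A cover either
contains `x_1, …, x_n` or, if `x_i` is the first of these that it omits, contains `x_1, …, x_{i-1}`
together with the neighbours of `x_i` listed in row `i`. Since `λ` decreases and `μ` increases, the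
latter set is itself a cover, and `μ_i ≥ i - 1` makes its two parts disjoint.
-/

theorem idealHeight_eq_height {A : Type*} [CommRing A] (I : Ideal A) :
    idealHeight I = I.height := by
  apply le_antisymm
  · rw [I.height_eq_inf_minimalPrimes]
    exact le_iInf₂ fun p hp =>
      sInf_le ⟨⟨p, hp.isPrime⟩, hp.le, (PrimeSpectrum.height_eq_orderHeight _).symm⟩
  · refine le_sInf ?_
    rintro _ ⟨p, hp, rfl⟩
    rw [← PrimeSpectrum.height_eq_orderHeight]
    exact Ideal.height_mono hp

section VariableIdeals

variable {σ R : Type*} [CommRing R]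

theorem mem_span_X_image_of_X_mul_mem {s : Set σ} {a : σ} (ha : a ∉ s) {f : MvPolynomial σ R}
    (hf : X a * f ∈ Ideal.span (X '' s)) : f ∈ Ideal.span (X '' s) := by
  rw [mem_ideal_span_X_image] at hf ⊢
  intro d hd
  have hd' : Finsupp.single a 1 + d ∈ (X a * f).support := by
    rwa [mem_support_iff, coeff_X_mul, ← mem_support_iff]
  obtain ⟨i, hi, hdi⟩ := hf _ hd'
  have hai : a ≠ i := fun h => ha (h ▸ hi)
  exact ⟨i, hi, by simpa [Finsupp.single_eq_of_ne' hai] using hdi⟩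

theorem X_notMem_of_mem_minimalPrimes_span_X_image {s : Set σ} {a : σ} (ha : a ∉ s)
    {q : Ideal (MvPolynomial σ R)} (hq : q ∈ (Ideal.span (X '' s)).minimalPrimes) :
    X a ∉ q := fun hX =>
  let ⟨_, hf, hXf⟩ := Ideal.exists_mul_mem_of_mem_minimalPrimes hq hX
  hf (mem_span_X_image_of_X_mul_mem ha hXf)

theorem card_le_height_of_X_mem (s : Finset σ) {p : Ideal (MvPolynomial σ R)} [p.IsPrime]
    (hs : ∀ i ∈ s, X i ∈ p) : (s.card : ℕ∞) ≤ p.height := by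
  classical
  induction s using Finset.induction_on generalizing p with
  | empty => simp
  | insert a s ha ih =>
    rw [Finset.forall_mem_insert] at hs
    have hsp : Ideal.span (X '' (s : Set σ)) ≤ p :=
      Ideal.span_le.mpr (Set.image_subset_iff.mpr hs.2)
    obtain ⟨q, hq, hqp⟩ := Ideal.exists_minimalPrimes_le hsp
    have := hq.isPrime
    have hsq : ∀ i ∈ s, X i ∈ q := fun i hi => hq.le (Ideal.subset_span ⟨i, hi, rfl⟩)
    have hqp' : q < p := lt_of_le_of_ne hqp fun h =>
      X_notMem_of_mem_minimalPrimes_span_X_image ha hq (h ▸ hs.1)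
    calc ((insert a s).card : ℕ∞) = s.card + 1 := by
          rw [Finset.card_insert_of_notMem ha, Nat.cast_succ]
      _ ≤ q.height + 1 := by gcongr; exact ih hsq
      _ ≤ p.height := Ideal.height_add_one_le_of_lt_of_isPrime hqp'

theorem span_X_image_ne_top [Nontrivial R] (s : Set σ) :
    (Ideal.span (X '' s) : Ideal (MvPolynomial σ R)) ≠ ⊤ := by
  rw [Ideal.ne_top_iff_one, mem_ideal_span_X_image]
  simp

theorem height_span_X_image_le_card [Nontrivial R] [IsNoetherianRing R] [Finite σ]
    (s : Finset σ) :
    (Ideal.span (X '' (s : Set σ)) : Ideal (MvPolynomial σ R)).height ≤ s.card := by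
  obtain ⟨q, hq⟩ := Ideal.nonempty_minimalPrimes (span_X_image_ne_top (R := R) (s : Set σ))
  calc (Ideal.span (X '' (s : Set σ)) : Ideal (MvPolynomial σ R)).height
      ≤ q.height := Ideal.height_mono hq.le
    _ ≤ (X '' (s : Set σ) : Set (MvPolynomial σ R)).ncard :=
        Ideal.height_le_card_of_mem_minimalPrimes_span (s.finite_toSet.image X) hq
    _ ≤ s.card := by
        exact_mod_cast (Set.ncard_image_le s.finite_toSet).trans_eq (Set.ncard_coe_finset s)

end VariableIdeals

section EdgeIdeals

variable {σ : Type*}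

/-- A vertex cover of a graph with edge set `E`: a set of vertices meeting every edge. Edges are
ordered pairs, and loops are allowed. -/
def IsVertexCover (E : Set (σ × σ)) (s : Set σ) : Prop :=
  ∀ e ∈ E, e.1 ∈ s ∨ e.2 ∈ s

/-- The least size of a finite vertex cover of `E`; it is `⊤` if there is none. -/
noncomputable def vertexCoverNumber (E : Set (σ × σ)) : ℕ∞ :=
  ⨅ (s : Finset σ) (_ : IsVertexCover E s), (s.card : ℕ∞)

theorem vertexCoverNumber_le_card {E : Set (σ × σ)} {s : Finset σ} (hs : IsVertexCover E s) :
    vertexCoverNumber E ≤ s.card :=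
  iInf₂_le s hs

variable (R : Type*) [CommRing R]

/-- The edge ideal of `E` over `R`, generated by the products of the end points of the edges; a loop
contributes a square. -/
noncomputable def edgeIdeal (E : Set (σ × σ)) : Ideal (MvPolynomial σ R) :=
  Ideal.span ((fun e => X e.1 * X e.2) '' E)

variable {R}

theorem edgeIdeal_le_span_X_image {E : Set (σ × σ)} {s : Set σ} (hs : IsVertexCover E s) :
    edgeIdeal R E ≤ Ideal.span (X '' s) := by
  refine Ideal.span_le.mpr (Set.image_subset_iff.mpr fun e he => ?_)
  rcases hs e he with h | h
  · exact Ideal.mul_mem_right _ _ (Ideal.subset_span ⟨_, h, rfl⟩)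
  · exact Ideal.mul_mem_left _ _ (Ideal.subset_span ⟨_, h, rfl⟩)

theorem isVertexCover_of_edgeIdeal_le {E : Set (σ × σ)} {p : Ideal (MvPolynomial σ R)} [p.IsPrime]
    (hp : edgeIdeal R E ≤ p) : IsVertexCover E {i | X i ∈ p} := fun e he =>
  Ideal.IsPrime.mem_or_mem ‹_› (hp (Ideal.subset_span ⟨e, he, rfl⟩))

theorem height_edgeIdeal [Nontrivial R] [IsNoetherianRing R] [Finite σ] (E : Set (σ × σ)) :
    (edgeIdeal R E).height = vertexCoverNumber E := by
  apply le_antisymm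
  · exact le_iInf₂ fun s hs =>
      (Ideal.height_mono (edgeIdeal_le_span_X_image hs)).trans (height_span_X_image_le_card s)
  · rw [Ideal.height_eq_inf_minimalPrimes]
    refine le_iInf₂ fun p hp => ?_
    have := hp.isPrime
    let s := (Set.toFinite {i : σ | X i ∈ p}).toFinset
    have hs : IsVertexCover E s := by
      simpa only [s, Set.Finite.coe_toFinset] using isVertexCover_of_edgeIdeal_le hp.le
    have hsp : ∀ i ∈ s, X i ∈ p := fun i hi => by simpa [s] using hi
    exact (vertexCoverNumber_le_card hs).trans (card_le_height_of_X_mem s hsp)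

end EdgeIdeals

section FerrersGraphs

variable {n m : ℕ}

/-- The edges of the specialized skew Ferrers graph of shape `λ − μ`: row `i` joins the vertex `i`
to the vertices in the interval `[μ_i, λ_i)`, with rows and vertices counted from `0`. -/
def ferrersEdges (hnm : n ≤ m) (lam mu : Fin n → ℕ) : Set (Fin m × Fin m) :=
  {e | ∃ i : Fin n, e.1 = Fin.castLE hnm i ∧ (e.2 : ℕ) ∈ Finset.Ico (mu i) (lam i)}

/-- The vertices before `i` together with the neighbours of `i` listed in row `i`: what a vertex
cover has to contain if `i` is the first of the row vertices that it omits. -/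
def rowCover (m : ℕ) (lam mu : Fin n → ℕ) (i : Fin n) : Finset (Fin m) :=
  {j | (j : ℕ) ∈ Finset.range i ∪ Finset.Ico (mu i) (lam i)}

variable {hnm : n ≤ m} {lam mu : Fin n → ℕ}

theorem edgeIdeal_ferrersEdges (R : Type*) [CommRing R] :
    edgeIdeal R (ferrersEdges hnm lam mu) =
      Ideal.span {p : MvPolynomial (Fin m) R |
        ∃ (i : Fin n) (j : Fin m), mu i ≤ j.val ∧ j.val < lam i ∧
          p = X (Fin.castLE hnm i) * X j} := by
  refine congrArg Ideal.span (Set.ext fun p => ⟨?_, ?_⟩)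
  · rintro ⟨⟨_, j⟩, ⟨i, rfl, hj⟩, rfl⟩
    exact ⟨i, j, (Finset.mem_Ico.mp hj).1, (Finset.mem_Ico.mp hj).2, rfl⟩
  · rintro ⟨i, j, hmu, hlam, rfl⟩
    exact ⟨(_, j), ⟨i, rfl, Finset.mem_Ico.mpr ⟨hmu, hlam⟩⟩, rfl⟩

theorem card_rowCover (hnm : n ≤ m) {i : Fin n} (hlam_le : lam i ≤ m) (hmu_ge : i.val ≤ mu i) :
    (rowCover m lam mu i).card = (Finset.Ico (mu i) (lam i)).card + i.val := by
  have hdisj : Disjoint (Finset.range i) (Finset.Ico (mu i) (lam i)) := by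
    rw [Finset.range_eq_Ico]
    exact (Finset.Ico_disjoint_Ico_consecutive 0 _ _).mono_right
      (Finset.Ico_subset_Ico_left hmu_ge)
  have hlt : ∀ k ∈ Finset.range i ∪ Finset.Ico (mu i) (lam i), k < m := by
    simp only [Finset.mem_union, Finset.mem_range, Finset.mem_Ico]
    omega
  have hattach : rowCover m lam mu i = Finset.attachFin _ hlt := by
    ext j
    simp only [rowCover, Finset.mem_filter_univ, Finset.mem_attachFin]
  rw [hattach, Finset.card_attachFin, Finset.card_union_of_disjoint hdisj, Finset.card_range,
    add_comm]

theorem isVertexCover_rowCover (hlam_anti : Antitone lam) (hmu_mono : Monotone mu) (i : Fin n) :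
    IsVertexCover (ferrersEdges hnm lam mu) (rowCover m lam mu i) := by
  rintro ⟨_, j⟩ ⟨k, rfl, hj⟩
  simp only [rowCover, Finset.coe_filter_univ, Set.mem_ofPred_eq, Finset.mem_union,
    Finset.mem_range]
  rcases lt_or_ge k i with hki | hik
  · exact Or.inl (Or.inl hki)
  · exact Or.inr (Or.inr (Finset.Ico_subset_Ico (hmu_mono hik) (hlam_anti hik) hj))

theorem isVertexCover_map_castLEEmb :
    IsVertexCover (ferrersEdges hnm lam mu)
      (Finset.univ.map (Fin.castLEEmb hnm) : Finset (Fin m)) := by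
  rintro _ ⟨i, hi, _⟩
  exact Or.inl (hi ▸ Finset.mem_map_of_mem (Fin.castLEEmb hnm) (Finset.mem_univ i))

theorem rowCover_subset_of_isVertexCover {s : Finset (Fin m)}
    (hs : IsVertexCover (ferrersEdges hnm lam mu) s) {i : Fin n} (hi : Fin.castLE hnm i ∉ s)
    (hlt : ∀ k < i, Fin.castLE hnm k ∈ s) : rowCover m lam mu i ⊆ s := by
  intro j hj
  rw [rowCover, Finset.mem_filter_univ, Finset.mem_union, Finset.mem_range] at hj
  rcases hj with hj | hj
  · exact hlt ⟨j, hj.trans i.isLt⟩ hj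
  · exact (hs (Fin.castLE hnm i, j) ⟨i, rfl, hj⟩).resolve_left hi

theorem vertexCoverNumber_ferrersEdges_le (hn : 1 ≤ n) (hlam_anti : Antitone lam)
    (hlam_le : ∀ i, lam i ≤ m) (hmu_mono : Monotone mu) (hmu_ge : ∀ i : Fin n, i.val ≤ mu i) :
    vertexCoverNumber (ferrersEdges hnm lam mu) ≤
      (min (sInf {h : ℕ | ∃ i : Fin n, h = (Finset.Ico (mu i) (lam i)).card + i.val}) n : ℕ) := by
  rw [Nat.mono_cast.map_min]
  refine le_min ?_ ?_
  · obtain ⟨i, hi⟩ := Nat.sInf_mem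
      (s := {h : ℕ | ∃ i : Fin n, h = (Finset.Ico (mu i) (lam i)).card + i.val})
      ⟨_, ⟨0, hn⟩, rfl⟩
    rw [hi, ← card_rowCover hnm (hlam_le i) (hmu_ge i)]
    exact vertexCoverNumber_le_card (isVertexCover_rowCover hlam_anti hmu_mono i)
  · simpa only [Finset.card_map, Finset.card_fin] using
      vertexCoverNumber_le_card (isVertexCover_map_castLEEmb (hnm := hnm) (lam := lam) (mu := mu))

theorem le_vertexCoverNumber_ferrersEdges (hlam_le : ∀ i, lam i ≤ m)
    (hmu_ge : ∀ i : Fin n, i.val ≤ mu i) :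
    (min (sInf {h : ℕ | ∃ i : Fin n, h = (Finset.Ico (mu i) (lam i)).card + i.val}) n : ℕ) ≤
      vertexCoverNumber (ferrersEdges hnm lam mu) := by
  refine le_iInf₂ fun s hs => Nat.cast_le.mpr ?_
  by_cases hall : ∀ i, Fin.castLE hnm i ∈ s
  · have hsub : Finset.univ.map (Fin.castLEEmb hnm) ⊆ s := by
      simpa [Finset.subset_iff] using hall
    exact (min_le_right _ _).trans (by
      simpa only [Finset.card_map, Finset.card_fin] using Finset.card_le_card hsub)
  · push Not at hall
    obtain ⟨i, hi, hmin⟩ := wellFounded_lt.has_min {i | Fin.castLE hnm i ∉ s} hall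
    have hsub : rowCover m lam mu i ⊆ s :=
      rowCover_subset_of_isVertexCover hs hi fun k hk => not_not.mp fun h => hmin k h hk
    calc min (sInf {h : ℕ | ∃ i : Fin n, h = (Finset.Ico (mu i) (lam i)).card + i.val}) n
        ≤ (Finset.Ico (mu i) (lam i)).card + i.val :=
          (min_le_left _ _).trans (Nat.sInf_le ⟨i, rfl⟩)
      _ = (rowCover m lam mu i).card := (card_rowCover hnm (hlam_le i) (hmu_ge i)).symm
      _ ≤ s.card := Finset.card_le_card hsub

end FerrersGraphs

/-- `λ_i - μ_i` is replaced by the number of boxes in row `i`, which is `0` if `λ_i < μ_i`. -/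
theorem specialized_ferrers_height_general
    {R : Type*} [CommRing R] [Nontrivial R] [IsNoetherianRing R] {n m : ℕ} (hn : 1 ≤ n)
    (hnm : n ≤ m) {lam mu : Fin n → ℕ} (hlam_anti : Antitone lam) (hlam_le : ∀ i, lam i ≤ m)
    (hmu_mono : Monotone mu) (hmu_ge : ∀ i : Fin n, i.val ≤ mu i) :
    idealHeight
      (Ideal.span {p : MvPolynomial (Fin m) R |
        ∃ (i : Fin n) (j : Fin m), mu i ≤ j.val ∧ j.val < lam i ∧
          p = X (Fin.castLE hnm i) * X j}) =
      (min (sInf {h : ℕ | ∃ i : Fin n, h = (Finset.Ico (mu i) (lam i)).card + i.val}) n : ℕ) := by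
  rw [← edgeIdeal_ferrersEdges, idealHeight_eq_height, height_edgeIdeal]
  exact le_antisymm (vertexCoverNumber_ferrersEdges_le hn hlam_anti hlam_le hmu_mono hmu_ge)
    (le_vertexCoverNumber_ferrersEdges hlam_le hmu_ge)

/-- Assume `μ_i ≥ i − 1` for all `i`. Then the height of the
specialized ideal `Ī_{λ−μ} ⊆ S = K[x_1,…,x_m]` equals
`min{ min_{1≤j≤n} (λ_j − μ_j + j − 1), n }`.
Indices: `i : Fin n`/`j : Fin m` correspond to the 1-based indices `i.val+1`/`j.val+1`,
so the 1-based quantity `λ_j − μ_j + j − 1` reads `lam i - mu i + i.val`. -/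
theorem specialized_ferrers_height
    (K : Type*) [Field K] (n m : ℕ) (hn : 1 ≤ n) (hnm : n ≤ m)
    (lam mu : Fin n → ℕ)
    (hlam_top : lam ⟨0, hn⟩ = m)
    (hlam_anti : Antitone lam)
    (hlam_pos : 1 ≤ lam ⟨n - 1, by omega⟩)
    (hmu_mono : Monotone mu)
    (hmu_lt : mu ⟨n - 1, by omega⟩ < lam ⟨n - 1, by omega⟩)
    (hmu_ge : ∀ i : Fin n, i.val ≤ mu i) :
    idealHeight
      (Ideal.span {p : MvPolynomial (Fin m) K |
        ∃ (i : Fin n) (j : Fin m), mu i ≤ j.val ∧ j.val < lam i ∧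
          p = X (Fin.castLE hnm i) * X j}) =
      (min (sInf {h : ℕ | ∃ i : Fin n, h = lam i - mu i + i.val}) n : ℕ) := by
  simpa only [Nat.card_Ico] using specialized_ferrers_height_general hn hnm hlam_anti
    (fun i => (hlam_anti (Nat.zero_le i)).trans_eq hlam_top) hmu_mono hmu_ge
end
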